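/- Let k be a field, let X be an integral scheme of finite type and proper over k with function field K, and let A be a valuation subring of K containing k (so that the residue field κ_A is a field extension of k). Then the Krull dimension of the center of A on X, as a topological space, is at most the transcendence degree of κ_A over k. -/

import Mathlib

open AlgebraicGeometry CategoryTheory

instance {X : Scheme} [Nonempty X] : Nonempty (⊤ : X.Opens) :=
  ⟨⟨Nonempty.some inferInstance, trivial⟩⟩

/-- The canonical ring homomorphism from the base ring `k` to the function field of an
integral scheme `X` equipped with a structure morphism `f : X ⟶ Spec k`. -/
noncomputable def structureMapToFunctionField (k : Type*) [CommRing k] (X : Scheme)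
    [IsIntegral X] (f : X ⟶ Spec (CommRingCat.of k)) :
    CommRingCat.of k ⟶ X.functionField :=
  (Scheme.ΓSpecIso (CommRingCat.of k)).inv ≫ f.appTop ≫ (X.germToFunctionField ⊤)

/-- The *center* of a valuation subring `A` of the function field of an integral scheme
`X`. -/
def valuationCenter (X : Scheme) [IsIntegral X]
    (A : ValuationSubring X.functionField) : Set X :=
  {x : X | ∀ g : X.presheaf.stalk x,
    algebraMap (X.presheaf.stalk x) X.functionField g ∈ A}

section Aux

open TopologicalSpace Topology Order

lemma aux_dim_open {T : Type*} [TopologicalSpace T] (n : ℕ)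
    (h : (n : WithBot ℕ∞) ≤ topologicalKrullDim T) :
    ∃ x : T, ∀ U : Set T, IsOpen U → x ∈ U → (n : WithBot ℕ∞) ≤ topologicalKrullDim U := by
  obtain ⟨l, hl⟩ := Order.le_krullDim_iff.mp h
  obtain ⟨x, hx⟩ := l.head.isIrreducible.nonempty
  refine ⟨x, fun U hU hxU => ?_⟩
  have hemb : IsOpenEmbedding ((↑) : U → T) := hU.isOpenEmbedding_subtypeVal
  unfold topologicalKrullDim
  rw [Order.krullDim_eq_of_orderIso (IrreducibleCloseds.orderIsoOfIsOpenEmbedding _ hemb)]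
  refine Order.le_krullDim_iff.mpr ⟨⟨l.length, fun i => ⟨l i, ⟨⟨x, hxU⟩, ?_⟩⟩, fun i => l.step i⟩, hl⟩
  exact (LTSeries.head_le l i) hx

lemma aux_alg {k B κ : Type*} [Field k] [CommRing B] [Field κ] [Algebra k κ]
    (i : k →+* B) (hi : i.FiniteType) (φ : B →+* κ) (hφ : ∀ a, φ (i a) = algebraMap k κ a)
    (s : Set κ) (hs : IsTranscendenceBasis k ((↑) : s → κ)) (n : ℕ)
    (hn : (n : WithBot ℕ∞) ≤ ringKrullDim (B ⧸ RingHom.ker φ)) : (n : Cardinal) ≤ Cardinal.mk s := by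
  algebraize [i]
  have hp : (RingHom.ker φ).IsPrime := RingHom.ker_isPrime φ
  have : Nontrivial (B ⧸ RingHom.ker φ) := Ideal.Quotient.nontrivial_iff.mpr hp.ne_top
  let Φ : B →ₐ[k] κ := { φ with commutes' := hφ }
  obtain ⟨m, g, hg, hint⟩ := exists_integral_inj_algHom_of_fg k (B ⧸ RingHom.ker φ)
  have hdim : ringKrullDim (B ⧸ RingHom.ker φ) ≤ m := by
    have h1 : ringKrullDim (MvPolynomial (Fin m) k) = m := by
      rw [MvPolynomial.ringKrullDim_of_isNoetherianRing]; simp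
    rw [← h1]
    refine Order.krullDim_le_of_strictMono (PrimeSpectrum.comap g.toRingHom) ?_
    intro P Q hPQ
    algebraize [g.toRingHom]
    exact Ideal.IsIntegral.comap_lt_comap (R := MvPolynomial (Fin m) k) (I := P.asIdeal) (J := Q.asIdeal) hPQ
  have hnm : n ≤ m := by exact_mod_cast hn.trans hdim
  let ψ : (B ⧸ RingHom.ker φ) →ₐ[k] κ := Ideal.Quotient.liftₐ (RingHom.ker φ) Φ (fun a ha => ha)
  have hψ : Function.Injective ψ := RingHom.kerLift_injective φ
  have hind : AlgebraicIndependent k (fun j : Fin m => ψ (g (MvPolynomial.X j))) := by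
    have : MvPolynomial.aeval (fun j : Fin m => ψ (g (MvPolynomial.X j))) = ψ.comp g := by
      ext; simp
    rw [AlgebraicIndependent, this]
    exact hψ.comp hg
  have h2 := hind.lift_cardinalMk_le_trdeg
  rw [← hs.cardinalMk_eq_trdeg] at h2
  simp at h2
  exact le_trans (by exact_mod_cast hnm) h2

end Aux

/-- Let `k` be a field, `X` an integral scheme of finite type and proper over `k` with
function field `K`, and `A` a valuation subring of `K` containing (the image of) `k`, so
that the residue field `κ_A` is a field extension of `k`.  Then the Krull dimension of
the center of `A` on `X`, as a topological space, is at most the transcendence degree of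
`κ_A` over `k` (expressed here as the cardinality of a transcendence basis `s` of `κ_A`
over `k`). -/
theorem dim_center_le_trdeg
    (k : Type*) [Field k] (X : Scheme) [IsIntegral X]
    (f : X ⟶ Spec (CommRingCat.of k)) [IsProper f] [QuasiCompact f]
    (A : ValuationSubring X.functionField)
    (hk : ∀ a : k, structureMapToFunctionField k X f a ∈ A)
    [Algebra k (IsLocalRing.ResidueField A)]
    (halg : ∀ a : k, algebraMap k (IsLocalRing.ResidueField A) a =
      IsLocalRing.residue A ⟨structureMapToFunctionField k X f a, hk a⟩)
    (s : Set (IsLocalRing.ResidueField A))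
    (hs : IsTranscendenceBasis k ((↑) : s → IsLocalRing.ResidueField A)) :
    ∀ n : ℕ, (n : WithBot ℕ∞) ≤ topologicalKrullDim (valuationCenter X A) →
      (n : Cardinal) ≤ Cardinal.mk s := by
  intro n hn
  obtain ⟨x, hx⟩ := aux_dim_open n hn
  obtain ⟨_, ⟨U, hU, rfl⟩, hxU, -⟩ :=
    X.isBasis_affineOpens.exists_subset_of_mem_open (Set.mem_univ x.1) isOpen_univ
  have hU : IsAffineOpen U := hU
  have hne : Nonempty U := ⟨⟨x.1, hxU⟩⟩
  let ι : Γ(X, U) →+* A := (X.germToFunctionField U).hom.codRestrict A.toSubring (fun b => by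
    have := x.2 (X.presheaf.germ U x.1 hxU b)
    rwa [Scheme.algebraMap_germ_eq_germToFunctionField] at this)
  let φ : Γ(X, U) →+* IsLocalRing.ResidueField A := (IsLocalRing.residue A).comp ι
  let i : CommRingCat.of k ⟶ Γ(X, U) :=
    (Scheme.ΓSpecIso (CommRingCat.of k)).inv ≫ f.appLE ⊤ U (by simp)
  have hi : i.hom.FiniteType := by
    have h1 := f.finiteType_appLE (isAffineOpen_top _) hU (by simp)
    exact h1.comp (RingHom.FiniteType.of_surjective _
      (ConcreteCategory.bijective_of_isIso (Scheme.ΓSpecIso (CommRingCat.of k)).inv).2)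
  have hcomp : i ≫ X.germToFunctionField U = structureMapToFunctionField k X f := by
    simp only [i, structureMapToFunctionField, Scheme.Hom.appLE, Category.assoc]
    congr 2
    exact X.presheaf.germ_res (homOfLE le_top) _ _
  have hφ : ∀ a : k, φ (i.hom a) = algebraMap k (IsLocalRing.ResidueField A) a := by
    intro a
    rw [halg]
    have : ι (i.hom a) = ⟨structureMapToFunctionField k X f a, hk a⟩ := by
      apply Subtype.ext
      exact congrArg (fun t => t.hom a) hcomp
    exact congrArg (IsLocalRing.residue A) this
  refine aux_alg i.hom hi φ hφ s hs n ?_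
  rw [← PrimeSpectrum.topologicalKrullDim_eq_ringKrullDim]
  let W : Set (valuationCenter X A) := Subtype.val ⁻¹' (U : Set X)
  refine (hx W (U.isOpen.preimage continuous_subtype_val) hxU).trans ?_
  let j : W → PrimeSpectrum Γ(X, U) := fun w => hU.primeIdealOf ⟨w.1.1, w.2⟩
  have hj : Topology.IsInducing j := by
    have h1 : Topology.IsInducing (fun w : W => (⟨w.1.1, w.2⟩ : U)) := by
      rw [← Topology.IsInducing.subtypeVal.of_comp_iff]
      exact (Topology.IsInducing.subtypeVal (t := valuationCenter X A)).comp
        (Topology.IsInducing.subtypeVal (t := W))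
    exact hU.isoSpec.hom.homeomorph.isInducing.comp h1
  have he : Topology.IsClosedEmbedding
      (PrimeSpectrum.comap (Ideal.Quotient.mk (RingHom.ker φ))) :=
    PrimeSpectrum.isClosedEmbedding_comap_of_surjective _ _ Ideal.Quotient.mk_surjective
  have hr : ∀ w : W, ∃ q, PrimeSpectrum.comap (Ideal.Quotient.mk (RingHom.ker φ)) q = j w := by
    intro w
    have : j w ∈ Set.range (PrimeSpectrum.comap (Ideal.Quotient.mk (RingHom.ker φ))) := by
      rw [range_comap_of_surjective _ _ Ideal.Quotient.mk_surjective,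
        Ideal.mk_ker, PrimeSpectrum.mem_zeroLocus]
      intro b hb
      by_contra hbn
      have hloc := hU.isLocalization_stalk ⟨w.1.1, w.2⟩
      let _ := TopCat.Presheaf.algebra_section_stalk X.presheaf (⟨w.1.1, w.2⟩ : U)
      have hu := IsLocalization.map_units (M := (j w).asIdeal.primeCompl)
        (X.presheaf.stalk (⟨w.1.1, w.2⟩ : U).1) ⟨b, hbn⟩
      obtain ⟨c, hc⟩ := hu.exists_right_inv
      have hc' : X.presheaf.germ U w.1.1 w.2 b * c = 1 := hc
      have hcA := w.1.2 c
      have h2 := congrArg (algebraMap (X.presheaf.stalk w.1.1) X.functionField) hc'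
      rw [map_mul, map_one, Scheme.algebraMap_germ_eq_germToFunctionField] at h2
      have h3 : ι b * ⟨_, hcA⟩ = 1 := Subtype.ext h2
      have h4 := congrArg (IsLocalRing.residue A) h3
      rw [map_mul, map_one] at h4
      have h5 : IsLocalRing.residue A (ι b) = 0 := hb
      rw [h5, zero_mul] at h4
      exact zero_ne_one h4
    exact this
  choose g hg using hr
  have hgi : Topology.IsInducing g := by
    rw [← he.isInducing.of_comp_iff]
    convert hj
    exact funext hg
  exact hgi.topologicalKrullDim_le
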